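/- arXiv:quant-ph/0405134 — 4 statements merged into one kernel-verified Lean document; each statement's English description precedes it below -/
import Mathlib

section
/- First unitary extension theorem: Let U, Ũ and V be unitary operators on a finite-dimensional complex inner product space T, and let S be a subspace of T such that U and Ũ agree on S, i.e., U x = Ũ x for every x ∈ S (U and Ũ need not leave S invariant). Then there exists a unitary operator Ṽ on T such that Ṽ x = V x for every x ∈ S, and ‖Ṽ − Ũ‖ ≤ ‖V − U‖, where ‖·‖ is the operator norm. -/
/-- **First unitary extension theorem**: if unitaries `U` and `Ũ` on a finite-dimensional
complex inner product space `T` agree on a subspace `S`, then for any unitary `V` on `T` there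
is a unitary `Ṽ` on `T` agreeing with `V` on `S` such that `‖Ṽ − Ũ‖ ≤ ‖V − U‖`. -/
theorem first_unitary_extension {T : Type*} [NormedAddCommGroup T] [InnerProductSpace ℂ T]
    [FiniteDimensional ℂ T] (S : Submodule ℂ T) (U Ut V : T →L[ℂ] T)
    (hU : U ∈ unitary (T →L[ℂ] T)) (hUt : Ut ∈ unitary (T →L[ℂ] T))
    (hV : V ∈ unitary (T →L[ℂ] T))
    (hagree : ∀ x ∈ S, U x = Ut x) :
    ∃ Vt ∈ unitary (T →L[ℂ] T), (∀ x ∈ S, Vt x = V x) ∧ ‖Vt - Ut‖ ≤ ‖V - U‖ := by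
  -- `Vt = V U⁻¹ Ut`: it agrees with `V` wherever `Ut` agrees with `U`, and
  -- `Vt - Ut = (V - U) (U⁻¹ Ut)`, where right multiplication by a unitary preserves the norm.
  have hW : star U * Ut ∈ unitary (T →L[ℂ] T) := mul_mem (Unitary.star_mem hU) hUt
  refine ⟨V * (star U * Ut), mul_mem hV hW, fun x hx => ?_, le_of_eq ?_⟩
  · have h : (star U * U) x = x := by simp [Unitary.star_mul_self_of_mem hU]
    change V (star U (Ut x)) = V x
    rw [← hagree x hx]
    exact congrArg V h
  · have h : V * (star U * Ut) - Ut = (V - U) * (star U * Ut) := by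
      rw [sub_mul, ← mul_assoc U, Unitary.mul_star_self_of_mem hU, one_mul]
    rw [h, CStarRing.norm_mul_mem_unitary _ hW]
end

section
/- Second unitary extension theorem: Let U and V be unitary operators on a finite-dimensional complex inner product space T, and let S be a subspace of T. Then there exists a unitary operator Ṽ on T such that Ṽ x = V x for every x ∈ S, and ‖U − Ṽ‖ ≤ 2 ‖U|_S − V|_S‖, where ‖U|_S − V|_S‖ denotes the operator norm of the restriction of U − V to S (as a map from S into T) and ‖·‖ the operator norm on T. -/
/-!
Composing with `U⁻¹` reduces the theorem to `U = 1`: an isometry `J : S → T` that moves each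
vector `s` by at most `ε ‖s‖` has to be extended to an isometry of `T` that moves each vector `x`
by at most `2 ε ‖x‖`. If `1 ≤ ε`, every isometric extension works.

Suppose `ε < 1` and let `W = J S`. A vector `t ∈ Sᗮ` is almost orthogonal to `W`: its projection
to `W` is some `J s`, and `⟪J s, t⟫ = ⟪J s - s, t⟫`, so that projection has norm at most `ε ‖t‖`.
The isometry `R : Sᗮ → Wᗮ` is the isometric factor in the polar decomposition of the projection
`Sᗮ → Wᗮ`. Concretely, the compression of the projection onto `Wᗮ` to `Sᗮ` is diagonalised by an
orthonormal basis `b i` of `Sᗮ` with eigenvalues `lam i ∈ [1 - ε ^ 2, 1]`, and `R` sends `b i` to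
the normalised projection of `b i` to `Wᗮ`. As `⟪b i, R (b j)⟫` vanishes for `i ≠ j` and equals
`√(lam i) ≥ 1 - ε ^ 2` for `i = j`, it follows that `‖t - R t‖ ^ 2 ≤ 2 ε ^ 2 ‖t‖ ^ 2`. Gluing `J`
on `S` with `R` on `Sᗮ` gives an isometry of `T`, and
`(ε ‖s‖ + ‖t - R t‖) ^ 2 ≤ 2 ε ^ 2 ‖s‖ ^ 2 + 4 ε ^ 2 ‖t‖ ^ 2 ≤ (2 ε ‖s + t‖) ^ 2`.
-/

open scoped InnerProductSpace

/-- If the projection to `W` shrinks every vector of `K` by a factor `ε < 1`, then the polar part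
of the projection `K → Wᗮ` is an isometry close to the inclusion of `K`. -/
lemma exists_isometry_orthogonal {T : Type*} [NormedAddCommGroup T] [InnerProductSpace ℂ T]
    [FiniteDimensional ℂ T] (K W : Submodule ℂ T) (ε : ℝ) (h0 : 0 ≤ ε) (h1 : ε < 1)
    (h : ∀ t ∈ K, ‖W.starProjection t‖ ≤ ε * ‖t‖) :
    ∃ R : K →ₗᵢ[ℂ] Wᗮ, ∀ t : K, ‖(t : T) - R t‖ ^ 2 ≤ 2 * ε ^ 2 * ‖t‖ ^ 2 := by
  let C : K →ₗ[ℂ] Wᗮ := (Wᗮ.orthogonalProjectionOnto : T →ₗ[ℂ] Wᗮ) ∘ₗ K.subtype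
  let B : K →ₗ[ℂ] K := LinearMap.adjoint C ∘ₗ C
  have hB : B.IsSymmetric := fun x y => by
    simp [B, LinearMap.adjoint_inner_left, LinearMap.adjoint_inner_right]
  let b := hB.eigenvectorBasis rfl
  let lam := hB.eigenvalues rfl
  have hC : ∀ i j, ⟪C (b i), C (b j)⟫_ℂ = if i = j then (lam j : ℂ) else 0 := by
    intro i j
    have : ⟪C (b i), C (b j)⟫_ℂ = ⟪b i, B (b j)⟫_ℂ := by
      simp [B, LinearMap.adjoint_inner_right]
    rw [this, hB.apply_eigenvectorBasis rfl j, inner_smul_right,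
      orthonormal_iff_ite.mp b.orthonormal i j]
    split_ifs <;> simp [lam]
  have hn : ∀ i, ‖C (b i)‖ ^ 2 = lam i := by
    intro i
    have := hC i i
    rw [inner_self_eq_norm_sq_to_K] at this
    rw [if_pos rfl] at this
    exact Complex.ofReal_injective (by push_cast; exact this)
  have hsum : ∀ i, 1 = ‖W.starProjection (b i : T)‖ ^ 2 + ‖C (b i)‖ ^ 2 := by
    intro i
    have := Submodule.norm_sq_eq_add_norm_sq_projection (b i : T) W
    have hb : ‖(b i : T)‖ = 1 := b.orthonormal.1 i
    rw [hb] at this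
    simpa [C] using this
  have hlow : ∀ i, 1 - ε ^ 2 ≤ lam i := by
    intro i
    have h2 := h (b i) (b i).2
    have hb : ‖(b i : T)‖ = 1 := b.orthonormal.1 i
    rw [hb, mul_one] at h2
    have := hsum i
    rw [hn i] at this
    nlinarith [norm_nonneg (W.starProjection (b i : T))]
  have hle : ∀ i, lam i ≤ 1 := by
    intro i
    have := hsum i
    rw [hn i] at this
    nlinarith [sq_nonneg ‖W.starProjection (b i : T)‖]
  have hpos : ∀ i, 0 < lam i := fun i => lt_of_lt_of_le (by nlinarith) (hlow i)
  have hs : ∀ i, 1 - ε ^ 2 ≤ √(lam i) := fun i =>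
    (hlow i).trans (Real.le_sqrt_of_sq_le (by nlinarith [hpos i, hle i]))
  have hsp : ∀ i, 0 < √(lam i) := fun i => Real.sqrt_pos.mpr (hpos i)
  have hss : ∀ i, (√(lam i) : ℂ) * √(lam i) = lam i := fun i => by
    exact_mod_cast Real.mul_self_sqrt (hpos i).le
  have hsne : ∀ i, (√(lam i) : ℂ) ≠ 0 := fun i => by exact_mod_cast (hsp i).ne'
  let f : Fin (Module.finrank ℂ K) → Wᗮ := fun i => ((√(lam i) : ℂ)⁻¹) • C (b i)
  have hf : Orthonormal ℂ f := by
    rw [orthonormal_iff_ite]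
    intro i j
    simp only [f, inner_smul_left, inner_smul_right, hC]
    split_ifs with hij
    · subst hij
      rw [← hss i]
      simp only [map_inv₀, Complex.conj_ofReal]
      field_simp [hsne i]
    · simp
  let R0 : K →ₗ[ℂ] Wᗮ := b.toBasis.constr ℂ f
  have hR0 : ∀ i, R0 (b i) = f i := fun i => by
    rw [← b.coe_toBasis]
    exact b.toBasis.constr_basis ℂ f i
  have hR0o : Orthonormal ℂ (R0 ∘ b.toBasis) := by
    have : R0 ∘ b.toBasis = f := by funext i; simp [hR0]
    rwa [this]
  let R : K →ₗᵢ[ℂ] Wᗮ :=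
    R0.isometryOfOrthonormal (v := b.toBasis) (by simp [b.orthonormal]) hR0o
  have hR : ∀ i, R (b i) = f i := hR0
  refine ⟨R, fun t => ?_⟩
  have hbf : ∀ i j, ⟪(b i : T), (f j : T)⟫_ℂ = if i = j then (√(lam i) : ℂ) else 0 := by
    intro i j
    have h3 : ⟪(b i : T), (C (b j) : T)⟫_ℂ = ⟪C (b i), C (b j)⟫_ℂ := by
      simp only [C, LinearMap.comp_apply, ContinuousLinearMap.coe_coe, Submodule.subtype_apply]
      rw [Submodule.inner_orthogonalProjectionOnto_eq_of_mem_right]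
    simp only [f, Submodule.coe_smul, inner_smul_right, h3, hC]
    split_ifs with hij
    · subst hij
      rw [← hss i]
      field_simp [hsne i]
    · simp
  have hre : ⟪(t : T), (R t : T)⟫_ℂ = ((∑ i, √(lam i) * ‖b.repr t i‖ ^ 2 : ℝ) : ℂ) := by
    have ht := b.sum_repr t
    have hRt : (R t : T) = ∑ i, b.repr t i • (f i : T) := by
      conv_lhs => rw [← ht]
      simp [hR]
    have htt : (t : T) = ∑ i, b.repr t i • (b i : T) := by
      conv_lhs => rw [← ht]
      simp
    rw [hRt]
    conv_lhs => rw [htt]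
    rw [sum_inner]
    push_cast
    refine Finset.sum_congr rfl fun i _ => ?_
    rw [inner_sum, Finset.sum_eq_single i]
    · rw [inner_smul_left, inner_smul_right, hbf, if_pos rfl, ← Complex.conj_mul']
      ring
    · intro j _ hj
      rw [inner_smul_left, inner_smul_right, hbf, if_neg (Ne.symm hj)]
      simp
    · simp
  have hnt : ‖t‖ ^ 2 = ∑ i, ‖b.repr t i‖ ^ 2 := by
    rw [← b.repr.norm_map t, EuclideanSpace.norm_sq_eq]
  have hge : (1 - ε ^ 2) * ‖t‖ ^ 2 ≤ RCLike.re ⟪(t : T), (R t : T)⟫_ℂ := by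
    rw [hre, hnt, Finset.mul_sum]
    simp only [RCLike.re_to_complex, Complex.ofReal_re]
    exact Finset.sum_le_sum fun i _ => mul_le_mul_of_nonneg_right (hs i) (sq_nonneg _)
  have hexp := norm_sub_sq (𝕜 := ℂ) (t : T) (R t : T)
  have hRn : ‖(R t : T)‖ = ‖t‖ := R.norm_map t
  have htn : ‖(t : T)‖ = ‖t‖ := rfl
  rw [hRn, htn] at hexp
  linarith

/-- The case `U = 1` of the theorem, for an isometry defined on `S` only. -/
lemma exists_isometry_extension {T : Type*} [NormedAddCommGroup T] [InnerProductSpace ℂ T]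
    [FiniteDimensional ℂ T] (S : Submodule ℂ T) (J : S →ₗᵢ[ℂ] T) (ε : ℝ) (h0 : 0 ≤ ε)
    (h : ∀ s : S, ‖(s : T) - J s‖ ≤ ε * ‖s‖) :
    ∃ Z : T →ₗᵢ[ℂ] T, (∀ s : S, Z s = J s) ∧ ∀ x, ‖x - Z x‖ ≤ 2 * ε * ‖x‖ := by
  rcases le_or_gt 1 ε with h1 | h1
  · refine ⟨J.extend, fun s => J.extend_apply s, fun x => ?_⟩
    have := norm_sub_le x (J.extend x)
    rw [J.extend.norm_map] at this
    nlinarith [norm_nonneg x]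
  let W : Submodule ℂ T := LinearMap.range J.toLinearMap
  have hW : ∀ s, J s ∈ W := fun s => ⟨s, rfl⟩
  obtain ⟨R, hR⟩ := exists_isometry_orthogonal Sᗮ W ε h0 h1 (fun t ht => by
    obtain ⟨s, hs⟩ : W.starProjection t ∈ W := W.starProjection_apply_mem t
    change J s = _ at hs
    have e1 : ⟪W.starProjection t, t⟫_ℂ = ⟪J s - s, t⟫_ℂ := by
      rw [inner_sub_left, (Submodule.mem_orthogonal S t).mp ht s s.2, hs, sub_zero]
    have e2 : ⟪W.starProjection t, t⟫_ℂ = (‖W.starProjection t‖ : ℂ) ^ 2 := by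
      have := inner_self_eq_norm_sq_to_K (𝕜 := ℂ) (W.starProjection t)
      rw [Submodule.inner_starProjection_left_eq_right,
        Submodule.starProjection_eq_self_iff.mpr (W.starProjection_apply_mem t),
        ← Submodule.inner_starProjection_left_eq_right] at this
      exact this
    have e3 := norm_inner_le_norm (𝕜 := ℂ) (J s - s) t
    rw [← e1, e2] at e3
    have e4 := h s
    have e5 : ‖s‖ = ‖W.starProjection t‖ := by rw [← hs, J.norm_map]
    rw [norm_sub_rev, e5] at e4
    simp only [norm_pow, Complex.norm_real, norm_norm] at e3
    by_contra! hc
    have : 0 < ‖W.starProjection t‖ := lt_of_le_of_lt (by positivity) hc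
    nlinarith [mul_le_mul_of_nonneg_right e4 (norm_nonneg t)])
  let Z0 : T →ₗ[ℂ] T := J.toLinearMap ∘ₗ (S.orthogonalProjectionOnto : T →ₗ[ℂ] S) +
    Wᗮ.subtype ∘ₗ R.toLinearMap ∘ₗ (Sᗮ.orthogonalProjectionOnto : T →ₗ[ℂ] Sᗮ)
  have hZ0 : ∀ x, Z0 x = J (S.orthogonalProjectionOnto x) + (R (Sᗮ.orthogonalProjectionOnto x) : T) :=
    fun x => rfl
  have hpy : ∀ x, ‖x‖ ^ 2 = ‖S.orthogonalProjectionOnto x‖ ^ 2 + ‖Sᗮ.orthogonalProjectionOnto x‖ ^ 2 :=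
    fun x => Submodule.norm_sq_eq_add_norm_sq_projection x S
  have hZn : ∀ x, ‖Z0 x‖ = ‖x‖ := fun x => by
    have e := norm_add_sq_eq_norm_sq_add_norm_sq_of_inner_eq_zero (𝕜 := ℂ)
      (J (S.orthogonalProjectionOnto x)) (R (Sᗮ.orthogonalProjectionOnto x) : T)
      ((Submodule.mem_orthogonal W _).mp (R (Sᗮ.orthogonalProjectionOnto x)).2 _ (hW _))
    rw [← hZ0, J.norm_map, ← Submodule.coe_norm (R _), R.norm_map] at e
    have := hpy x
    rw [← sq_eq_sq₀ (norm_nonneg _) (norm_nonneg _)]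
    nlinarith
  refine ⟨⟨Z0, hZn⟩, fun s => ?_, fun x => ?_⟩
  · change Z0 s = _
    have : Sᗮ.orthogonalProjectionOnto (s : T) = 0 := by
      rw [Submodule.orthogonalProjectionOnto_eq_zero_iff]
      exact S.le_orthogonal_orthogonal s.2
    rw [hZ0, this]
    simp
  · change ‖x - Z0 x‖ ≤ _
    set s := S.orthogonalProjectionOnto x with hs
    set t := Sᗮ.orthogonalProjectionOnto x with ht
    have hx : x = (s : T) + t := (Submodule.starProjection_add_starProjection_orthogonal
      (K := S) x).symm
    have e1 : x - Z0 x = ((s : T) - J s) + ((t : T) - R t) := by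
      rw [hZ0, ← hs, ← ht]
      nth_rewrite 1 [hx]
      abel
    have e2 := norm_add_le ((s : T) - J s) ((t : T) - R t)
    rw [← e1] at e2
    have e3 := h s
    have e4 := hR t
    have e5 := hpy x
    rw [← hs, ← ht] at e5
    refine abs_le_of_sq_le_sq' ?_ (by positivity) |>.2
    have e6 : ‖x - Z0 x‖ ≤ ε * ‖s‖ + ‖(t : T) - R t‖ := by linarith
    have e7 := pow_le_pow_left₀ (norm_nonneg _) e6 2
    have e8 : (2 * ε * ‖x‖) ^ 2 = 4 * ε ^ 2 * (‖s‖ ^ 2 + ‖t‖ ^ 2) := by rw [← e5]; ring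
    rw [e8]
    nlinarith [sq_nonneg (ε * ‖s‖ - ‖(t : T) - R t‖), sq_nonneg (ε * ‖s‖)]

/-- **Second unitary extension theorem**: for unitaries `U`, `V` on a finite-dimensional complex
inner product space `T` and a subspace `S` of `T`, there exists a unitary `Ṽ` agreeing with `V`
on `S` such that `‖U − Ṽ‖ ≤ 2 ‖U|_S − V|_S‖`, where `‖U|_S − V|_S‖` is the operator norm of the
restriction of `U − V` to `S` (as a map from `S` into `T`). -/
theorem second_unitary_extension {T : Type*} [NormedAddCommGroup T] [InnerProductSpace ℂ T]
    [FiniteDimensional ℂ T] (S : Submodule ℂ T) (U V : T →L[ℂ] T)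
    (hU : U ∈ unitary (T →L[ℂ] T)) (hV : V ∈ unitary (T →L[ℂ] T)) :
    ∃ Vt ∈ unitary (T →L[ℂ] T), (∀ x ∈ S, Vt x = V x) ∧
      ‖U - Vt‖ ≤ 2 * ‖(U - V).comp S.subtypeL‖ := by
  have hUn : ∀ x, ‖U x‖ = ‖x‖ := (ContinuousLinearMap.norm_map_iff_adjoint_comp_self U).mpr hU.1
  have hVn : ∀ x, ‖V x‖ = ‖x‖ := (ContinuousLinearMap.norm_map_iff_adjoint_comp_self V).mpr hV.1
  have hUn' : ∀ x, ‖star U x‖ = ‖x‖ :=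
    (ContinuousLinearMap.norm_map_iff_adjoint_comp_self (star U)).mpr (Unitary.star_mem hU).1
  have hUU : ∀ x, U (star U x) = x := fun x => congrArg (fun A : T →L[ℂ] T => A x) hU.2
  let J : S →ₗᵢ[ℂ] T := ⟨(star U : T →L[ℂ] T).toLinearMap ∘ₗ V.toLinearMap ∘ₗ S.subtype, fun s => by
    change ‖star U (V s)‖ = _
    rw [hUn', hVn]; rfl⟩
  have hJ : ∀ s, U (J s) = V s := fun s => hUU _
  obtain ⟨Z, hZ, hZn⟩ := exists_isometry_extension S J ‖(U - V).comp S.subtypeL‖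
    (ContinuousLinearMap.opNorm_nonneg _)
    (fun s => by
      rw [← hUn, map_sub, hJ]
      exact ((U - V).comp S.subtypeL).le_opNorm s)
  let Vt : T →L[ℂ] T := U * Z.toContinuousLinearMap
  have hVt : ∀ x, Vt x = U (Z x) := fun x => rfl
  have hstar : star Vt * Vt = 1 := (ContinuousLinearMap.norm_map_iff_adjoint_comp_self Vt).mp
    fun x => by rw [hVt, hUn, Z.norm_map]
  -- In finite dimension a left inverse is also a right inverse.
  have hstar' : Vt * star Vt = 1 := by
    have e : (star Vt).toLinearMap * Vt.toLinearMap = 1 :=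
      congrArg ContinuousLinearMap.toLinearMap hstar
    exact ContinuousLinearMap.coe_injective (mul_eq_one_comm.mp e)
  refine ⟨Vt, ⟨hstar, hstar'⟩, fun x hx => ?_, ?_⟩
  · rw [hVt, hZ ⟨x, hx⟩, hJ]
  · refine ContinuousLinearMap.opNorm_le_bound _ (by positivity) fun x => ?_
    rw [sub_apply, hVt, ← map_sub, hUn]
    exact hZn x
end

section
/- Special case of the second unitary extension theorem with U = I: Let V be a unitary operator on a finite-dimensional complex inner product space T and let S be a subspace of T. Then there exists a unitary operator Ṽ on T such that Ṽ x = V x for every x ∈ S, and ‖Ṽ − I‖² ≤ 4 ‖I|_S − V|_S‖, where ‖I|_S − V|_S‖ denotes the operator norm of the restriction of I − V to S. -/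
/-!
The proof is a polar decomposition. Let `P` be the orthogonal projection onto `S`, let
`E = V P V*` be the orthogonal projection onto `V S`, and let `ε = ‖(1 - V)|_S‖`. If `ε ≥ 1` then
`V` itself works, since `‖V - 1‖ ≤ 2`. If `ε < 1`, set `B = V P + (1 - E) (1 - P)`, which agrees with
`V` on `S` and maps `Sᗮ` into `(V S)ᗮ`. As `V` is `ε`-close to the identity on `S`, the spaces `Sᗮ`
and `V S` are nearly orthogonal: `‖E (1 - P)‖ ≤ ε`. Hence `1 - B* B = (1 - P) E (1 - P)` has norm at
most `ε ^ 2`, so `Q = √(B* B)` is invertible with `‖1 - Q‖ ≤ ε ^ 2`, and `u = B Q⁻¹` is unitary and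
still agrees with `V` on `S`.

Two applications of Pythagoras give the bound: on `Sᗮ`, `u - 1 = (u - B) - E` with orthogonal
ranges, so `‖(u - 1) (1 - P)‖ ^ 2 ≤ ε ^ 4 + ε ^ 2 ≤ 2 ε ^ 2`; together with `‖(u - 1) P‖ ≤ ε` this
yields `‖u - 1‖ ^ 2 ≤ 3 ε ^ 2 ≤ 4 ε`.

The argument is carried out in a unital C⋆-algebra (`exists_unitary_of_norm_lt_one`); finite
dimensionality is used only to know that the isometry `u` is unitary.
-/

section CStar

variable {A : Type*} [CStarAlgebra A]

/-- Pythagoras for elements with orthogonal ranges. -/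
lemma norm_add_sq_le_of_star_mul_eq_zero {a b : A} (h : star a * b = 0) :
    ‖a + b‖ ^ 2 ≤ ‖a‖ ^ 2 + ‖b‖ ^ 2 := by
  have h' : star b * a = 0 := by simpa using congrArg star h
  have : star (a + b) * (a + b) = star a * a + star b * b := by
    simp [add_mul, mul_add, h, h']
  simp only [sq, ← CStarRing.norm_star_mul_self, this]
  exact norm_add_le _ _

/-- Pythagoras for elements with orthogonal supports. -/
lemma norm_add_sq_le_of_mul_star_eq_zero {a b : A} (h : a * star b = 0) :
    ‖a + b‖ ^ 2 ≤ ‖a‖ ^ 2 + ‖b‖ ^ 2 := by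
  have := norm_add_sq_le_of_star_mul_eq_zero (a := star a) (b := star b) (by simpa using h)
  simpa [← star_add] using this

variable [PartialOrder A] [StarOrderedRing A]

lemma isUnit_one_add_of_nonneg {q : A} (hq : 0 ≤ q) : IsUnit (1 + q) :=
  ((isStrictlyPositive_one (A := A)).add_nonneg hq).isUnit

/-- On the spectrum of `q`, `|1 - x| ≤ |1 - x| * (1 + x) = |1 - x ^ 2|`. -/
lemma norm_one_sub_le_of_nonneg {q : A} (hq : 0 ≤ q) : ‖1 - q‖ ≤ ‖1 - q * q‖ := by
  have hsa : IsSelfAdjoint q := .of_nonneg hq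
  have h1 : cfc (fun x : ℝ => 1 - x) q = 1 - q := by
    rw [cfc_sub (fun _ => (1 : ℝ)) (fun x => x) q, cfc_const_one ℝ q, cfc_id' ℝ q]
  have h2 : cfc (fun x : ℝ => 1 - x * x) q = 1 - q * q := by
    rw [cfc_sub (fun _ => (1 : ℝ)) (fun x => x * x) q, cfc_const_one ℝ q,
      cfc_mul (fun x => x) (fun x => x) q, cfc_id' ℝ q]
  rw [← h1]
  refine norm_cfc_le (norm_nonneg _) fun x hx => ?_
  have hx0 : 0 ≤ x := spectrum_nonneg_of_nonneg hq hx
  have h3 := norm_apply_le_norm_cfc (fun x : ℝ => 1 - x * x) q hx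
  rw [h2] at h3
  refine le_trans ?_ h3
  have : (1 - x * x : ℝ) = (1 - x) * (1 + x) := by ring
  rw [this, norm_mul, Real.norm_of_nonneg (by linarith : 0 ≤ 1 + x)]
  nlinarith [norm_nonneg (1 - x)]

/-- If one-sided inverses in `A` are two-sided, a unitary `V` that is at distance `ε < 1` from `1`
on the projection `P` can be changed off `P` into a unitary `u` within `√3 * ε` of `1`. -/
lemma exists_unitary_of_norm_lt_one (hA : ∀ a b : A, a * b = 1 → b * a = 1) {P V : A}
    (hP : IsStarProjection P) (hV : V ∈ unitary A) {ε : ℝ} (hε : ε < 1)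
    (hVP : ‖(1 - V) * P‖ ≤ ε) :
    ∃ u ∈ unitary A, u * P = V * P ∧ ‖u - 1‖ ^ 2 ≤ 3 * ε ^ 2 := by
  have hε0 : 0 ≤ ε := (norm_nonneg _).trans hVP
  obtain ⟨hV1, hV2⟩ := Unitary.mem_iff.mp hV
  have hPP : P * P = P := hP.isIdempotentElem
  have hPs : star P = P := hP.isSelfAdjoint
  obtain ⟨D, hD⟩ : ∃ D, D = 1 - P := ⟨_, rfl⟩
  have hDs : star D = D := by simp [hD, hPs]
  have hDD : D * D = D := by simp [hD, mul_sub, sub_mul, hPP]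
  have hPD : P * D = 0 := by simp [hD, mul_sub, hPP]
  have hDP : D * P = 0 := by simp [hD, sub_mul, hPP]
  obtain ⟨E, hE⟩ : ∃ E, E = V * P * star V := ⟨_, rfl⟩
  have hEs : star E = E := by simp [hE, hPs, mul_assoc]
  have hEV : E * V = V * P := by rw [hE, mul_assoc, hV1, mul_one]
  have hEE : E * E = E := by
    nth_rw 2 [hE]
    rw [← mul_assoc, ← mul_assoc, hEV, mul_assoc V P P, hPP, ← hE]
  have hEVP : E * (V * P) = V * P := by rw [← mul_assoc, hEV, mul_assoc, hPP]
  have hPVE : P * star V * E = P * star V := by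
    simpa [hEs, hPs] using congrArg star hEVP
  have hD1 : ‖D‖ ≤ 1 := hD ▸ hP.one_sub.norm_le
  obtain ⟨K, hK⟩ : ∃ K, K = E * D := ⟨_, rfl⟩
  have hKs : star K = D * E := by simp [hK, hEs, hDs]
  -- `‖E D‖ = ‖P V* D‖`, and `P V* D` is the adjoint of `D V P = - D (1 - V) P`.
  have hKn : ‖K‖ ≤ ε := by
    have h1 : K = V * (star (D * ((V - 1) * P))) := by
      simp [hK, hE, hPs, hDs, sub_mul, mul_sub, hPD, mul_assoc]
    rw [h1, CStarRing.norm_mem_unitary_mul _ hV, norm_star]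
    calc ‖D * ((V - 1) * P)‖ ≤ ‖D‖ * ‖(V - 1) * P‖ := norm_mul_le _ _
      _ ≤ 1 * ε := by
        gcongr
        rwa [← norm_neg, ← neg_mul, neg_sub]
      _ = ε := one_mul _
  obtain ⟨B, hB⟩ : ∃ B, B = V * P + (D - K) := ⟨_, rfl⟩
  have hBs : star B = P * star V + (D - D * E) := by simp [hB, hKs, hPs, hDs]
  have hBP : B * P = V * P := by
    simp [hB, add_mul, sub_mul, hK, mul_assoc, hPP, hDP]
  have hBD : B * D = D - K := by
    simp [hB, add_mul, sub_mul, hK, mul_assoc, hDD, hPD]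
  have hEBD : E * (D - K) = 0 := by
    rw [hK, mul_sub, ← mul_assoc, hEE, sub_self]
  have hBB : star B * B = P + (D - D * E * D) := by
    have e1 : P * star V * (V * P) = P := by
      rw [mul_assoc, ← mul_assoc (star V), hV1, one_mul, hPP]
    have e2 : P * star V * (D - K) = 0 := by
      rw [← hPVE, mul_assoc, hEBD, mul_zero]
    have e3 : (D - D * E) * (V * P) = 0 := by
      rw [sub_mul, mul_assoc D E, hEVP, sub_self]
    have e4 : (D - D * E) * (D - K) = D - D * E * D := by
      rw [sub_mul, mul_assoc D E, hEBD, mul_zero, sub_zero, mul_sub, hDD, hK, mul_assoc]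
    rw [hBs]; nth_rw 1 [hB]
    rw [add_mul, mul_add, mul_add, e1, e2, e3, e4, add_zero, zero_add]
  have h1BB : 1 - star B * B = star K * K := by
    have : star K * K = D * E * D := by
      rw [hKs, hK, mul_assoc, ← mul_assoc E, hEE, mul_assoc]
    rw [hBB, this, hD]; abel
  have h1BBn : ‖1 - star B * B‖ ≤ ε ^ 2 := by
    rw [h1BB, CStarRing.norm_star_mul_self, ← sq]; gcongr
  obtain ⟨Q, hQ0, hQ⟩ : ∃ Q : A, 0 ≤ Q ∧ Q * Q = star B * B :=
    ⟨CFC.sqrt (star B * B), CFC.sqrt_nonneg _, CFC.sqrt_mul_sqrt_self _ (star_mul_self_nonneg B)⟩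
  have hQs : star Q = Q := (IsSelfAdjoint.of_nonneg hQ0).star_eq
  have hQn : ‖1 - Q‖ ≤ ε ^ 2 := (norm_one_sub_le_of_nonneg hQ0).trans (by rwa [hQ])
  have hQu : IsUnit Q := by
    have := isUnit_one_sub_of_norm_lt_one (x := 1 - Q) (hQn.trans_lt (by nlinarith))
    simpa using this
  obtain ⟨Qi, hQi1, hQi2⟩ : ∃ Qi, Q * Qi = 1 ∧ Qi * Q = 1 := isUnit_iff_exists.mp hQu
  have hQis : star Qi * Q = 1 := by simpa [hQs] using congrArg star hQi1
  -- `(1 + Q) (1 - Q) P = (1 - B* B) P = 0` and `1 + Q` is invertible.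
  have hQP : Q * P = P := by
    have h1 : (1 + Q) * (P - Q * P) = 0 := by
      have : Q * (Q * P) = P := by
        rw [← mul_assoc, hQ, hBB, add_mul, sub_mul, mul_assoc _ D P, hDP, hPP]; simp
      rw [add_mul, one_mul, mul_sub, this]; abel
    have := (isUnit_one_add_of_nonneg hQ0).mul_right_eq_zero.mp h1
    exact (sub_eq_zero.mp this).symm
  obtain ⟨u, hu⟩ : ∃ u, u = B * Qi := ⟨_, rfl⟩
  have huQ : u * Q = B := by rw [hu, mul_assoc, hQi2, mul_one]
  have huP : u * P = V * P := by
    rw [← hBP, ← huQ, mul_assoc, hQP]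
  have huu : star u * u = 1 := by
    rw [hu, star_mul, mul_assoc, ← mul_assoc (star B), ← hQ, mul_assoc Q, hQi1, mul_one, hQis]
  have huU : u ∈ unitary A := Unitary.mem_iff.mpr ⟨huu, hA _ _ huu⟩
  refine ⟨u, huU, huP, ?_⟩
  have hEu : E * (u * D) = 0 := by
    have h1 : P * star V = P * star u := by simpa [hPs] using (congrArg star huP).symm
    rw [hE, mul_assoc V, h1, mul_assoc, mul_assoc P, ← mul_assoc (star u), huu, one_mul, hPD,
      mul_zero]
  have hn1 : ‖(u - B) * D‖ ≤ ε ^ 2 := by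
    have : (u - B) * D = u * ((1 - Q) * D) := by
      rw [← mul_assoc, mul_sub, huQ, mul_one]
    rw [this, CStarRing.norm_mem_unitary_mul _ huU]
    calc ‖(1 - Q) * D‖ ≤ ‖1 - Q‖ * ‖D‖ := norm_mul_le _ _
      _ ≤ ε ^ 2 * 1 := by gcongr
      _ = ε ^ 2 := mul_one _
  have hn2 : ‖(u - 1) * D‖ ^ 2 ≤ ε ^ 4 + ε ^ 2 := by
    have h1 : (u - 1) * D = -K + (u - B) * D := by
      rw [sub_mul, sub_mul, hBD, one_mul]; abel
    have h2 : star (-K) * ((u - B) * D) = 0 := by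
      rw [star_neg, hKs, sub_mul, hBD, neg_mul, mul_assoc, mul_sub, hEu, hEBD]; simp
    have h3 := norm_add_sq_le_of_star_mul_eq_zero h2
    rw [← h1, norm_neg] at h3
    have h4 : ‖K‖ ^ 2 ≤ ε ^ 2 := by gcongr
    have h5 : ‖(u - B) * D‖ ^ 2 ≤ (ε ^ 2) ^ 2 := by gcongr
    linarith [show (ε ^ 2) ^ 2 = ε ^ 4 by ring]
  have hn3 : ‖(u - 1) * P‖ ≤ ε := by
    rw [sub_mul, huP, ← sub_mul, ← norm_neg, ← neg_mul, neg_sub]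
    simpa using hVP
  have h1 : u - 1 = (u - 1) * P + (u - 1) * D := by
    rw [← mul_add, hD]; simp
  have h2 : (u - 1) * P * star ((u - 1) * D) = 0 := by
    rw [star_mul, hDs, mul_assoc, ← mul_assoc P, hPD]; simp
  have h3 := norm_add_sq_le_of_mul_star_eq_zero h2
  rw [← h1] at h3
  have h4 : ‖(u - 1) * P‖ ^ 2 ≤ ε ^ 2 := by gcongr
  have h5 : ε ^ 2 ≤ 1 := by nlinarith
  nlinarith [sq_nonneg ε]

end CStar


/-- Special case of the second unitary extension theorem with `U = I`: for a unitary `V` on a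
finite-dimensional complex inner product space `T` and a subspace `S` of `T`, there exists a
unitary `Ṽ` agreeing with `V` on `S` such that `‖Ṽ − I‖² ≤ 4 ‖I|_S − V|_S‖`, where
`‖I|_S − V|_S‖` is the operator norm of the restriction of `I − V` to `S`. -/
theorem second_unitary_extension_id {T : Type*} [NormedAddCommGroup T] [InnerProductSpace ℂ T]
    [FiniteDimensional ℂ T] (S : Submodule ℂ T) (V : T →L[ℂ] T)
    (hV : V ∈ unitary (T →L[ℂ] T)) :
    ∃ Vt ∈ unitary (T →L[ℂ] T), (∀ x ∈ S, Vt x = V x) ∧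
      ‖Vt - 1‖ ^ 2 ≤ 4 * ‖((1 : T →L[ℂ] T) - V).comp S.subtypeL‖ := by
  have := FiniteDimensional.complete ℂ T
  obtain ⟨ε, hε⟩ : ∃ ε, ε = ‖((1 : T →L[ℂ] T) - V).comp S.subtypeL‖ := ⟨_, rfl⟩
  rw [← hε]
  have hε0 : 0 ≤ ε := by rw [hε]; positivity
  rcases lt_or_ge ε 1 with h | h
  · have hA (a b : T →L[ℂ] T) (hab : a * b = 1) : b * a = 1 := by
      have h1 : (a : T →ₗ[ℂ] T) * (b : T →ₗ[ℂ] T) = 1 :=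
        LinearMap.ext fun x => congrArg (fun f : T →L[ℂ] T => f x) hab
      have h2 := mul_eq_one_comm.mp h1
      exact ContinuousLinearMap.ext fun x => congrArg (fun f : T →ₗ[ℂ] T => f x) h2
    have hVP : ‖(1 - V) * S.starProjection‖ ≤ ε := by
      refine ContinuousLinearMap.opNorm_le_bound _ hε0 fun x => ?_
      rw [hε]
      refine (((1 - V).comp S.subtypeL).le_opNorm (S.orthogonalProjectionOnto x)).trans ?_
      gcongr
      exact S.norm_orthogonalProjectionOnto_apply_le x
    obtain ⟨u, hu, huP, hun⟩ :=
      exists_unitary_of_norm_lt_one hA isStarProjection_starProjection hV h hVP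
    refine ⟨u, hu, fun x hx => ?_, by nlinarith⟩
    have := congrArg (fun f : T →L[ℂ] T => f x) huP
    simpa [Submodule.starProjection_eq_self_iff.mpr hx] using this
  · refine ⟨V, hV, fun _ _ => rfl, ?_⟩
    have h1 : ‖V - 1‖ ≤ 2 := by
      refine ContinuousLinearMap.opNorm_le_bound _ zero_le_two fun x => ?_
      have h2 : ‖V x‖ = ‖x‖ := ContinuousLinearMap.norm_map_of_mem_unitary hV x
      calc ‖V x - x‖ ≤ ‖V x‖ + ‖x‖ := norm_sub_le _ _
        _ = 2 * ‖x‖ := by rw [h2]; ring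
    nlinarith [norm_nonneg (V - 1)]
end

section
/- Corollary of the second unitary extension theorem: Let U, Ũ and V be unitary operators on a finite-dimensional complex inner product space T, and let S be a subspace of T on which U and Ũ agree (U x = Ũ x for all x ∈ S). Then there exists a unitary operator Ṽ on T with Ṽ x = V x for every x ∈ S and ‖Ṽ − Ũ‖ ≤ 2 ‖U − V‖. -/
/-! The unitary `V U⁻¹ Ut` agrees with `V` on `S`, because `U` and `Ut` agree there. Moreover
`V U⁻¹ Ut - Ut = (V - U) U⁻¹ Ut`, and multiplying by unitaries preserves the operator norm, so the
distance to `Ut` equals `‖U - V‖`; the constant `2` could be replaced by `1`. -/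

/-- Corollary of the second unitary extension theorem: if unitaries `U` and `Ũ` on a
finite-dimensional complex inner product space `T` agree on a subspace `S`, then for any
unitary `V` there exists a unitary `Ṽ` agreeing with `V` on `S` such that
`‖Ṽ − Ũ‖ ≤ 2 ‖U − V‖`. -/
theorem second_unitary_extension_corollary {T : Type*} [NormedAddCommGroup T]
    [InnerProductSpace ℂ T] [FiniteDimensional ℂ T] (S : Submodule ℂ T) (U Ut V : T →L[ℂ] T)
    (hU : U ∈ unitary (T →L[ℂ] T)) (hUt : Ut ∈ unitary (T →L[ℂ] T))
    (hV : V ∈ unitary (T →L[ℂ] T))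
    (hagree : ∀ x ∈ S, U x = Ut x) :
    ∃ Vt ∈ unitary (T →L[ℂ] T), (∀ x ∈ S, Vt x = V x) ∧ ‖Vt - Ut‖ ≤ 2 * ‖U - V‖ := by
  -- `Vt = V U⁻¹ Ut`, with the adjoint `star U` playing the role of `U⁻¹`.
  refine ⟨V * star U * Ut, mul_mem (mul_mem hV (Unitary.star_mem hU)) hUt, fun x hx => ?_, ?_⟩
  · have h : (star U * U) x = x := by rw [Unitary.star_mul_self_of_mem hU]; rfl
    calc (V * star U * Ut) x = V (star U (Ut x)) := rfl
      _ = V ((star U * U) x) := by rw [← hagree x hx]; rfl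
      _ = V x := by rw [h]
  · have h : V * star U * Ut - Ut = (V - U) * star U * Ut := by
      rw [sub_mul, sub_mul, Unitary.mul_star_self_of_mem hU, one_mul]
    rw [h, CStarRing.norm_mul_mem_unitary _ hUt,
      CStarRing.norm_mul_mem_unitary _ (Unitary.star_mem hU), norm_sub_rev]
    linarith [norm_nonneg (U - V)]
end
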